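/- Failure of every positive Hölder modulus for the envelope derivative in the degenerate counterexample: Define a : ℝ → ℝ by a(θ) = (1/4)·exp(−1/θ²)·sin(10/θ) for θ ≠ 0 and a(0) = 0; define t⋆ : ℝ → ℝ by t⋆(θ) = −sign(a(θ))·(log(1/|a(θ)|))^{−1/2} if a(θ) ≠ 0 and t⋆(θ) = 0 otherwise; and define G : ℝ → ℝ by G(θ) = a′(θ)·t⋆(θ), where a′ is the derivative of a. Then for every nonzero integer k, with θ_k := 10/(kπ), one has G(θ_k) = 0, and for every α > 0 the function G is not α-Hölder continuous on any neighborhood of θ_k: for all C > 0 and all ε > 0 there exists θ with 0 < |θ − θ_k| < ε and |G(θ) − G(θ_k)| > C·|θ − θ_k|^α. -/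

import Mathlib

/-- `a(θ) = (1/4)·exp(-1/θ²)·sin(10/θ)` (with `a(0) = 0`). -/
noncomputable def aFun (θ : ℝ) : ℝ :=
  if θ = 0 then 0 else 1 / 4 * Real.exp (-1 / θ ^ 2) * Real.sin (10 / θ)

/-- `t⋆(θ) = -sign(a(θ))·(log(1/|a(θ)|))^{-1/2}` if `a(θ) ≠ 0`, and `t⋆(θ) = 0` otherwise. -/
noncomputable def tstarFun (θ : ℝ) : ℝ :=
  if aFun θ = 0 then 0
  else -(Real.sign (aFun θ)) * Real.log (1 / |aFun θ|) ^ (-(1 : ℝ) / 2)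

/-- The envelope derivative `G(θ) = a′(θ)·t⋆(θ)`. -/
noncomputable def GFun (θ : ℝ) : ℝ := deriv aFun θ * tstarFun θ

open Filter Topology in
lemma aFun_analytic (x : ℝ) (hx : x ≠ 0) : AnalyticAt ℝ aFun x := by
  have h : AnalyticAt ℝ (fun θ : ℝ => 1 / 4 * Real.exp (-1 / θ ^ 2) * Real.sin (10 / θ)) x := by
    have h1 : AnalyticAt ℝ (fun θ : ℝ => -1 / θ ^ 2) x :=
      analyticAt_const.div (analyticAt_id.pow 2) (pow_ne_zero 2 hx)
    have h2 : AnalyticAt ℝ (fun θ : ℝ => 10 / θ) x :=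
      analyticAt_const.div analyticAt_id hx
    exact (analyticAt_const.mul h1.rexp).mul (Real.analyticAt_sin.comp h2)
  refine h.congr ?_
  filter_upwards [isOpen_ne.mem_nhds hx] with y hy
  have hy' : y ≠ 0 := hy
  simp [aFun, hy']

lemma aFun_deriv_ne (k : ℤ) (hk : k ≠ 0) :
    aFun (10 / ((k : ℝ) * Real.pi)) = 0 ∧ deriv aFun (10 / ((k : ℝ) * Real.pi)) ≠ 0 := by
  have hk' : (k : ℝ) ≠ 0 := by exact_mod_cast hk
  have hpi := Real.pi_ne_zero
  set x : ℝ := 10 / ((k : ℝ) * Real.pi) with hxd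
  have hx : x ≠ 0 := by rw [hxd]; positivity
  have hinv : 10 / x = k * Real.pi := by rw [hxd]; field_simp
  have hs : Real.sin (10 / x) = 0 := by rw [hinv]; exact Real.sin_int_mul_pi k
  have hc : Real.cos (10 / x) ≠ 0 := by
    intro h
    have := Real.sin_sq_add_cos_sq (10 / x)
    rw [hs, h] at this
    norm_num at this
  refine ⟨by simp [aFun, hs], ?_⟩
  have h1 : HasDerivAt (fun θ : ℝ => 10 / θ) (-10 / x ^ 2) x := by
    have := (hasDerivAt_const x (10 : ℝ)).fun_div (hasDerivAt_id' x) hx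
    simpa using this
  have h2 : DifferentiableAt ℝ (fun θ : ℝ => 1 / 4 * Real.exp (-1 / θ ^ 2)) x := by
    have h1 : DifferentiableAt ℝ (fun θ : ℝ => -1 / θ ^ 2) x :=
      (differentiableAt_const _).div (differentiableAt_id.pow 2) (pow_ne_zero 2 hx)
    exact (differentiableAt_const _).mul h1.exp
  have h3 := h2.hasDerivAt.mul h1.sin
  have h4 : aFun =ᶠ[nhds x] ((fun θ : ℝ => 1 / 4 * Real.exp (-1 / θ ^ 2)) *
      (fun θ => Real.sin (10 / θ))) := by
    filter_upwards [isOpen_ne.mem_nhds hx] with y hy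
    have hy' : y ≠ 0 := hy
    simp [aFun, hy']
  rw [h4.deriv_eq, h3.deriv, hs, mul_zero, zero_add]
  have : Real.exp (-1 / x ^ 2) ≠ 0 := (Real.exp_pos _).ne'
  have : (-10 / x ^ 2) ≠ 0 := div_ne_zero (by norm_num) (pow_ne_zero 2 hx)
  positivity

lemma key_bound (α c D : ℝ) (hα : 0 < α) (hc : 0 < c) (hD : 0 < D) :
    ∀ᶠ u : ℝ in nhdsWithin 0 (Set.Ioi 0),
      D * u ^ α < c * Real.log (1 / u) ^ (-(1 : ℝ) / 2) := by
  have h := tendsto_log_mul_rpow_nhdsGT_zero (r := 2 * α) (by positivity)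
  have h' := h.eventually (lt_mem_nhds (show -(c / D) ^ 2 < 0 by
    have : 0 < c / D := by positivity
    nlinarith [sq_nonneg (c / D), pow_pos this 2]))
  have h1 : ∀ᶠ u : ℝ in nhdsWithin 0 (Set.Ioi 0), u < 1 :=
    nhdsWithin_le_nhds (gt_mem_nhds one_pos)
  filter_upwards [h', h1, self_mem_nhdsWithin] with u hu hu1 hu0
  have hu0 : 0 < u := hu0
  have hL : 0 < Real.log (1 / u) := Real.log_pos (by rw [lt_div_iff₀ hu0]; linarith)
  have hlog : Real.log u = -Real.log (1 / u) := by simp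
  rw [hlog] at hu
  set L := Real.log (1 / u)
  have e1 : L ^ (-(1 : ℝ) / 2) = (√L)⁻¹ := by
    rw [Real.sqrt_eq_rpow, ← Real.rpow_neg hL.le]; norm_num
  have hs : 0 < √L := Real.sqrt_pos.2 hL
  have e2 : u ^ (2 * α) = (u ^ α) ^ 2 := by
    rw [mul_comm, Real.rpow_mul hu0.le]; norm_num
  rw [e1, ← div_eq_mul_inv, lt_div_iff₀ hs]
  rw [e2] at hu
  have hua : 0 < u ^ α := Real.rpow_pos_of_pos hu0 α
  have h5 : (u ^ α * √L) ^ 2 < (c / D) ^ 2 := by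
    rw [mul_pow, Real.sq_sqrt hL.le]; linarith
  have h6 := lt_of_pow_lt_pow_left₀ 2 (by positivity) h5
  rw [lt_div_iff₀ hD] at h6
  linarith

/-- **Failure of every positive Hölder modulus for the envelope derivative.**
For every nonzero integer `k`, with `θ_k = 10 / (k π)`, one has `G(θ_k) = 0` and for every
`α > 0` the function `G` is not `α`-Hölder continuous on any neighborhood of `θ_k`:
for all `C > 0` and `ε > 0` there exists `θ` with `0 < |θ - θ_k| < ε` and
`|G(θ) - G(θ_k)| > C·|θ - θ_k|^α`. -/
theorem envelope_derivative_not_Holder (k : ℤ) (hk : k ≠ 0) :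
    GFun (10 / ((k : ℝ) * Real.pi)) = 0 ∧
    ∀ α : ℝ, 0 < α → ∀ Cst : ℝ, 0 < Cst → ∀ ε : ℝ, 0 < ε →
      ∃ θ : ℝ, 0 < |θ - 10 / ((k : ℝ) * Real.pi)| ∧
        |θ - 10 / ((k : ℝ) * Real.pi)| < ε ∧
        Cst * |θ - 10 / ((k : ℝ) * Real.pi)| ^ α <
          |GFun θ - GFun (10 / ((k : ℝ) * Real.pi))| := by
  obtain ⟨ha0, hd⟩ := aFun_deriv_ne k hk
  have hx : (10 / ((k : ℝ) * Real.pi)) ≠ 0 := by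
    have hk' : (k : ℝ) ≠ 0 := by exact_mod_cast hk
    have hpi := Real.pi_ne_zero
    positivity
  have han := aFun_analytic _ hx
  set x : ℝ := 10 / ((k : ℝ) * Real.pi)
  have hG : GFun x = 0 := by simp [GFun, tstarFun, ha0]
  refine ⟨hG, ?_⟩
  intro α hα C hC ε hε
  rw [hG]
  set d := deriv aFun x with hdd
  have hD : HasDerivAt aFun d x := han.differentiableAt.hasDerivAt
  have hdp : 0 < |d| := abs_pos.2 hd
  have hder : ∀ᶠ θ in nhdsWithin x {x}ᶜ, |d| / 2 < |deriv aFun θ| :=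
    nhdsWithin_le_nhds (han.deriv.continuousAt.abs.eventually (lt_mem_nhds (by
      show |d| / 2 < |d|
      linarith)))
  have hslope : ∀ᶠ θ in nhdsWithin x {x}ᶜ, |d| / 2 < |slope aFun x θ| :=
    (hasDerivAt_iff_tendsto_slope.1 hD).abs.eventually (lt_mem_nhds (by linarith))
  have hta : Filter.Tendsto aFun (nhdsWithin x {x}ᶜ) (nhdsWithin 0 {0}ᶜ) := by
    have := hD.tendsto_nhdsNE hd
    rwa [ha0] at this
  have hkey := (tendsto_abs_nhdsNE_zero.comp hta).eventually
    (key_bound α (|d| / 2) (C * (2 / |d|) ^ α) hα (by positivity) (by positivity))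
  have hball : ∀ᶠ θ in nhdsWithin x {x}ᶜ, |θ - x| < ε :=
    nhdsWithin_le_nhds (Metric.ball_mem_nhds x hε)
  have hane : ∀ᶠ θ in nhdsWithin x {x}ᶜ, aFun θ ≠ 0 := hta.eventually self_mem_nhdsWithin
  have hne : ∀ᶠ θ in nhdsWithin x {x}ᶜ, θ ≠ x := self_mem_nhdsWithin
  have hsmall : ∀ᶠ θ in nhdsWithin x {x}ᶜ, |aFun θ| < 1 :=
    ((tendsto_abs_nhdsNE_zero.comp hta).mono_right nhdsWithin_le_nhds).eventually
      (gt_mem_nhds one_pos)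
  obtain ⟨θ, h1, h2, h3, h4, h5, h6, h7⟩ := (hder.and (hslope.and (hkey.and (hball.and
    (hane.and (hne.and hsmall)))))).exists
  have hpos : 0 < |θ - x| := abs_pos.2 (sub_ne_zero.2 h6)
  refine ⟨θ, hpos, h4, ?_⟩
  have hap : 0 < |aFun θ| := abs_pos.2 h5
  have hle : |θ - x| ≤ 2 / |d| * |aFun θ| := by
    rw [slope_def_field, ha0, sub_zero, abs_div, lt_div_iff₀ hpos] at h2
    rw [div_mul_eq_mul_div, le_div_iff₀ hdp]
    linarith
  have hL : 0 < Real.log (1 / |aFun θ|) := Real.log_pos (by rw [lt_div_iff₀ hap]; linarith)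
  have hLp : 0 < Real.log (1 / |aFun θ|) ^ (-(1 : ℝ) / 2) := Real.rpow_pos_of_pos hL _
  have hsg : |Real.sign (aFun θ)| = 1 := by
    rcases Real.sign_apply_eq_of_ne_zero _ h5 with h | h <;> simp [h]
  have hGe : |GFun θ - 0| = |deriv aFun θ| * Real.log (1 / |aFun θ|) ^ (-(1 : ℝ) / 2) := by
    rw [sub_zero, GFun, tstarFun, if_neg h5, abs_mul, abs_mul, abs_neg, hsg, one_mul,
      abs_of_pos hLp]
  rw [hGe]
  simp only [Function.comp] at h3
  calc C * |θ - x| ^ α ≤ C * (2 / |d| * |aFun θ|) ^ α := by gcongr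
    _ = C * (2 / |d|) ^ α * |aFun θ| ^ α := by
      rw [Real.mul_rpow (by positivity) (by positivity), mul_assoc]
    _ < |d| / 2 * Real.log (1 / |aFun θ|) ^ (-(1 : ℝ) / 2) := h3
    _ ≤ _ := by gcongr
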